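/- Fix a probability vector μ = (μ_1,…,μ_r) with positive entries, integers 1 ≤ K_1 ≤ … ≤ K_r ≤ P/2, α ∈ (0,1), β, γ ∈ (0,1/2), positive integers ℓ ≤ n, L_n = min(⌊P/K_1⌋, ⌊n/2⌋), and thresholds X_{n,m} = ⌊β m K_1⌋ for 1 ≤ m ≤ L_n and X_{n,m} = ⌊γP⌋ for m > L_n (with X_{n,0} = 0). Let N be a Binomial(ℓ, α) random variable and let S be an independent random variable with P[S = K_j] = μ_j. Then E[ C(P − max(K_1, X_{n,N}+1)·1[N>0], S) / C(P, S) ] ≤ min{ 1 − α λ_1, min(1 − μ_r + μ_r e^{−α p_1r β ℓ}, e^{−α p_11 β ℓ}) + e^{−γ K_1}·1[ℓ > L_n] }, where p_ij = 1 − C(P−K_i, K_j)/C(P, K_j) and λ_1 = Σ_{j=1}^r μ_j p_1j. -/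

import Mathlib

/-!
As a function of `x`, the ratio `C(P - x, b) / C(P, b)` is the product over `t < x` of the factors
`1 - b / (P - t)`, which decrease in `t` and in `b` and are at most `exp (-b / P)`. Since they
decrease in `t`, the ratio is log-concave in `x`; writing `q = 1 - p_{1i}` for its value at `x = K₁`
and `b = K_i`, it is at most `q ^ s` as soon as `x ≥ K₁` and `x ≥ s K₁`.

For `1 - α λ₁` it suffices that at least `K₁` keys have to be avoided when `N > 0`: the ratio is
then at most `q + (1 - q) 0 ^ N`, and `E[0 ^ N] = (1 - α) ^ ℓ ≤ 1 - α`. For the other bound, the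
ratio is at most `q ^ (β N)` up to the cut-off and at most `exp (-γ K₁)` above it, while Bernoulli's
inequality gives
`E[q ^ (β N)] = (1 - α + α q ^ β) ^ ℓ ≤ (1 - α β p_{1i}) ^ ℓ ≤ exp (-α β p_{1i} ℓ)`.
-/

open Filter

/-- Probability that a uniformly random `b`-subset of a `P`-set avoids a fixed `a`-subset. -/
noncomputable def avoidProb (P a b : ℕ) : ℝ := ((P - a).choose b : ℝ) / (P.choose b : ℝ)

/-- `p_{ab}` : probability that independent uniformly random key rings of sizes
`a` and `b` (from a pool of size `P`) intersect. -/
noncomputable def pEdge (P a b : ℕ) : ℝ := 1 - avoidProb P a b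

/-- `λ_i` : mean edge probability of a class-`i` node in the inhomogeneous random key graph. -/
noncomputable def lamb {r : ℕ} (μ : Fin (r + 1) → ℝ) (K : Fin (r + 1) → ℕ) (P : ℕ)
    (i : Fin (r + 1)) : ℝ :=
  ∑ j, μ j * pEdge P (K i) (K j)

/-- The cut-off `Lₙ = min(⌊P/K₁⌋, ⌊n/2⌋)` (natural division is the floor). -/
def cutoff (n P K1 : ℕ) : ℕ := min (P / K1) (n / 2)

/-- The key-threshold sequence `X_{n,m}`. -/
noncomputable def keyThr (n P K1 : ℕ) (β γ : ℝ) (m : ℕ) : ℕ :=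
  if m ≤ cutoff n P K1 then ⌊β * (m : ℝ) * (K1 : ℝ)⌋₊ else ⌊γ * (P : ℝ)⌋₊

section FiniteSums

open Finset

lemma prod_range_pow_le_prod_range_pow {R : Type*} [CommSemiring R] [PartialOrder R]
    [IsOrderedRing R] {ρ : ℕ → R} (hρ : Antitone ρ) (hρ0 : ∀ t, 0 ≤ ρ t) {k x : ℕ}
    (hkx : k ≤ x) :
    (∏ t ∈ range x, ρ t) ^ k ≤ (∏ t ∈ range k, ρ t) ^ x := by
  induction x, hkx using Nat.le_induction with
  | base => exact le_rfl
  | succ x hkx ih =>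
    have factor_pow_le : ρ x ^ k ≤ ∏ t ∈ range k, ρ t := by
      calc ρ x ^ k = ∏ _t ∈ range k, ρ x := by rw [prod_const, card_range]
        _ ≤ ∏ t ∈ range k, ρ t :=
            prod_le_prod (fun _ _ => hρ0 x) fun t ht => hρ ((mem_range.1 ht).le.trans hkx)
    rw [prod_range_succ, mul_pow, pow_succ]
    exact mul_le_mul ih factor_pow_le (pow_nonneg (hρ0 x) k)
      (pow_nonneg (prod_nonneg fun t _ => hρ0 t) x)

variable {ι R : Type*} [Fintype ι] {w c : ι → R}

lemma sum_mul_add_const [Semiring R] (hw1 : ∑ i, w i = 1) (d : R) :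
    ∑ i, w i * (c i + d) = ∑ i, w i * c i + d := by
  simp only [mul_add, sum_add_distrib, ← sum_mul, hw1, one_mul]

lemma sum_mul_le_of_forall_le [Semiring R] [PartialOrder R] [IsOrderedRing R]
    (hw0 : ∀ i, 0 ≤ w i) (hw1 : ∑ i, w i = 1) {d : R} (hc : ∀ i, c i ≤ d) :
    ∑ i, w i * c i ≤ d := by
  calc ∑ i, w i * c i ≤ ∑ i, w i * d :=
        sum_le_sum fun i _ => mul_le_mul_of_nonneg_left (hc i) (hw0 i)
    _ = d := by rw [← sum_mul, hw1, one_mul]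

lemma sum_mul_le_one_sub_add_mul [Ring R] [PartialOrder R] [IsOrderedRing R]
    (hw0 : ∀ i, 0 ≤ w i) (hw1 : ∑ i, w i = 1) (hc : ∀ i, c i ≤ 1) (k : ι) :
    ∑ i, w i * c i ≤ 1 - w k + w k * c k := by
  have term_le_sum : w k * (1 - c k) ≤ ∑ i, w i * (1 - c i) :=
    single_le_sum (f := fun i => w i * (1 - c i))
      (fun i _ => mul_nonneg (hw0 i) (sub_nonneg.2 (hc i))) (mem_univ k)
  calc ∑ i, w i * c i = 1 - ∑ i, w i * (1 - c i) := by
        simp only [mul_sub, mul_one, sum_sub_distrib, hw1, sub_sub_cancel]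
    _ ≤ 1 - w k * (1 - c k) := sub_le_sub_left term_le_sum 1
    _ = 1 - w k + w k * c k := by rw [mul_sub, mul_one, sub_sub_eq_add_sub, add_sub_right_comm]

end FiniteSums

section AvoidProb

variable {P a b c x : ℕ}

lemma avoidProb_nonneg (P a b : ℕ) : 0 ≤ avoidProb P a b := by
  unfold avoidProb
  positivity

lemma avoidProb_zero_left (hb : b ≤ P) : avoidProb P 0 b = 1 :=
  div_self (Nat.cast_ne_zero.2 (Nat.choose_pos hb).ne')

lemma avoidProb_antitone_left (P b : ℕ) : Antitone fun x => avoidProb P x b := fun x y hxy => by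
  have := Nat.choose_le_choose b (Nat.sub_le_sub_left hxy P)
  simp only [avoidProb]
  gcongr

lemma avoidProb_le_one (P a b : ℕ) : avoidProb P a b ≤ 1 :=
  div_le_one_of_le₀ (Nat.cast_le.2 (Nat.choose_le_choose b (Nat.sub_le P a))) (Nat.cast_nonneg _)

/-- The factor `1 - b / (P - t)` by which the avoidance probability changes when the avoided set
grows from `t` to `t + 1` elements. The truncated subtractions make it `0` once `P - t ≤ b`. -/
noncomputable def avoidRatio (P b t : ℕ) : ℝ := ((P - t - b : ℕ) : ℝ) / ((P - t : ℕ) : ℝ)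

lemma avoidRatio_nonneg (P b t : ℕ) : 0 ≤ avoidRatio P b t := by
  unfold avoidRatio
  positivity

lemma avoidRatio_antitone (P b : ℕ) : Antitone (avoidRatio P b) := fun s t hst => by
  have hsub : P - t ≤ P - s := Nat.sub_le_sub_left hst P
  rcases (P - t).eq_zero_or_pos with ht | ht
  · calc avoidRatio P b t = 0 := by simp only [avoidRatio, ht, Nat.cast_zero, div_zero]
      _ ≤ avoidRatio P b s := avoidRatio_nonneg P b s
  · have cross_mul_le : (P - t - b) * (P - s) ≤ (P - s - b) * (P - t) := by
      rw [Nat.sub_mul (P - t), Nat.sub_mul (P - s), mul_comm (P - s)]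
      exact Nat.sub_le_sub_left (Nat.mul_le_mul_left b hsub) _
    unfold avoidRatio
    rw [div_le_div_iff₀ (Nat.cast_pos.2 ht) (Nat.cast_pos.2 (ht.trans_le hsub))]
    exact_mod_cast cross_mul_le

lemma avoidRatio_antitone_left (P t : ℕ) : Antitone fun b => avoidRatio P b t :=
  fun b c hbc => by
    simp only [avoidRatio]
    gcongr

lemma avoidRatio_le_exp (hP : 0 < P) (hbP : b ≤ P) (t : ℕ) :
    avoidRatio P b t ≤ Real.exp (-(b / P)) := by
  have hP' : (P : ℝ) ≠ 0 := Nat.cast_ne_zero.2 hP.ne'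
  calc avoidRatio P b t ≤ avoidRatio P b 0 := avoidRatio_antitone P b t.zero_le
    _ = 1 - b / P := by rw [avoidRatio, Nat.sub_zero, Nat.cast_sub hbP, sub_div, div_self hP']
    _ ≤ Real.exp (-(b / P)) := Real.one_sub_le_exp_neg _

lemma avoidProb_succ_left (hb : 0 < b) (x : ℕ) :
    avoidProb P (x + 1) b = avoidProb P x b * avoidRatio P b x := by
  unfold avoidProb avoidRatio
  rw [← Nat.sub_sub]
  rcases P - x with _ | m
  · simp [Nat.choose_eq_zero_of_lt hb]
  · have choose_mul_succ : (m.choose b : ℝ) * ((m + 1 : ℕ) : ℝ)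
        = ((m + 1).choose b : ℝ) * ((m + 1 - b : ℕ) : ℝ) :=
      mod_cast Nat.choose_mul_succ_eq m b
    rw [Nat.add_sub_cancel, div_mul_div_comm, ← choose_mul_succ,
      mul_div_mul_right _ _ (Nat.cast_ne_zero.2 m.succ_ne_zero)]

lemma avoidProb_eq_prod_avoidRatio (hb : 0 < b) (hbP : b ≤ P) (x : ℕ) :
    avoidProb P x b = ∏ t ∈ Finset.range x, avoidRatio P b t := by
  induction x with
  | zero => rw [avoidProb_zero_left hbP, Finset.prod_range_zero]
  | succ x ih => rw [avoidProb_succ_left hb, ih, Finset.prod_range_succ]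

lemma avoidProb_le_exp (hb : 0 < b) (hbP : b ≤ P) (x : ℕ) :
    avoidProb P x b ≤ Real.exp (-(x * (b / P))) := by
  rw [avoidProb_eq_prod_avoidRatio hb hbP]
  calc ∏ t ∈ Finset.range x, avoidRatio P b t
      ≤ ∏ _t ∈ Finset.range x, Real.exp (-(b / P)) :=
        Finset.prod_le_prod (fun t _ => avoidRatio_nonneg P b t)
          fun t _ => avoidRatio_le_exp (hb.trans_le hbP) hbP t
    _ = Real.exp (-(x * (b / P))) := by
        rw [Finset.prod_const, Finset.card_range, ← Real.exp_nat_mul, mul_neg]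

lemma avoidProb_le_avoidProb_right (hb : 0 < b) (hbc : b ≤ c) (hcP : c ≤ P) (x : ℕ) :
    avoidProb P x c ≤ avoidProb P x b := by
  rw [avoidProb_eq_prod_avoidRatio (hb.trans_le hbc) hcP,
    avoidProb_eq_prod_avoidRatio hb (hbc.trans hcP)]
  exact Finset.prod_le_prod (fun t _ => avoidRatio_nonneg P c t)
    fun t _ => avoidRatio_antitone_left P t hbc

lemma avoidProb_pow_le_avoidProb_pow (hb : 0 < b) (hbP : b ≤ P) (hax : a ≤ x) :
    avoidProb P x b ^ a ≤ avoidProb P a b ^ x := by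
  simpa only [avoidProb_eq_prod_avoidRatio hb hbP] using
    prod_range_pow_le_prod_range_pow (avoidRatio_antitone P b) (avoidRatio_nonneg P b) hax

lemma avoidProb_le_rpow {s : ℝ} (ha : 0 < a) (hb : 0 < b) (hbP : b ≤ P) (hax : a ≤ x)
    (hs : 0 ≤ s) (hsx : s * a ≤ x) :
    avoidProb P x b ≤ avoidProb P a b ^ s := by
  have hq : 0 ≤ avoidProb P a b := avoidProb_nonneg P a b
  calc avoidProb P x b = (avoidProb P x b ^ a) ^ (a : ℝ)⁻¹ :=
        (Real.pow_rpow_inv_natCast (avoidProb_nonneg P x b) ha.ne').symm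
    _ ≤ (avoidProb P a b ^ x) ^ (a : ℝ)⁻¹ :=
        Real.rpow_le_rpow (pow_nonneg (avoidProb_nonneg P x b) a)
          (avoidProb_pow_le_avoidProb_pow hb hbP hax) (inv_nonneg.2 a.cast_nonneg)
    _ = avoidProb P a b ^ ((x : ℝ) / a) := by
        rw [← Real.rpow_natCast, ← Real.rpow_mul hq, div_eq_mul_inv]
    _ ≤ avoidProb P a b ^ s :=
        Real.rpow_le_rpow_of_exponent_ge' hq (avoidProb_le_one P a b) hs
          ((le_div_iff₀ (Nat.cast_pos.2 ha)).2 hsx)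

lemma pEdge_nonneg (P a b : ℕ) : 0 ≤ pEdge P a b :=
  sub_nonneg.2 (avoidProb_le_one P a b)

lemma pEdge_le_pEdge_right (hb : 0 < b) (hbc : b ≤ c) (hcP : c ≤ P) (a : ℕ) :
    pEdge P a b ≤ pEdge P a c :=
  sub_le_sub_left (avoidProb_le_avoidProb_right hb hbc hcP a) 1

end AvoidProb

section BinomialExpectation

/-- The expectation of `f N` for a `Binomial(ℓ, α)` variable `N`, as a finite sum. -/
noncomputable def binomExp (ℓ : ℕ) (α : ℝ) (f : ℕ → ℝ) : ℝ :=
  ∑ j ∈ Finset.range (ℓ + 1), (ℓ.choose j : ℝ) * α ^ j * (1 - α) ^ (ℓ - j) * f j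

variable {ℓ : ℕ} {α β q : ℝ} {f g : ℕ → ℝ}

lemma sum_range_sum_eq_sum_mul_binomExp {ι : Type*} [Fintype ι] (ℓ : ℕ) (α : ℝ) (w : ι → ℝ)
    (F : ℕ → ι → ℝ) :
    ∑ j ∈ Finset.range (ℓ + 1), ∑ i,
        (ℓ.choose j : ℝ) * α ^ j * (1 - α) ^ (ℓ - j) * w i * F j i =
      ∑ i, w i * binomExp ℓ α fun j => F j i := by
  rw [Finset.sum_comm]
  simp only [binomExp, Finset.mul_sum, mul_assoc, mul_left_comm (w _)]

lemma binomExp_mono (hα : α ∈ Set.Icc (0 : ℝ) 1) (hfg : ∀ j ≤ ℓ, f j ≤ g j) :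
    binomExp ℓ α f ≤ binomExp ℓ α g := by
  have hα0 : 0 ≤ α := hα.1
  have hα1 : 0 ≤ 1 - α := sub_nonneg.2 hα.2
  refine Finset.sum_le_sum fun j hj => mul_le_mul_of_nonneg_left ?_ (by positivity)
  exact hfg j (Nat.le_of_lt_succ (Finset.mem_range.1 hj))

lemma binomExp_add (ℓ : ℕ) (α : ℝ) (f g : ℕ → ℝ) :
    binomExp ℓ α (fun j => f j + g j) = binomExp ℓ α f + binomExp ℓ α g := by
  simp only [binomExp, mul_add, Finset.sum_add_distrib]

lemma binomExp_const_mul (ℓ : ℕ) (α c : ℝ) (f : ℕ → ℝ) :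
    binomExp ℓ α (fun j => c * f j) = c * binomExp ℓ α f := by
  simp only [binomExp, Finset.mul_sum, mul_left_comm]

lemma binomExp_pow (ℓ : ℕ) (α z : ℝ) :
    binomExp ℓ α (fun j => z ^ j) = (α * z + (1 - α)) ^ ℓ := by
  rw [binomExp, add_pow]
  exact Finset.sum_congr rfl fun j _ => by ring

lemma binomExp_const (ℓ : ℕ) (α c : ℝ) : binomExp ℓ α (fun _ => c) = c := by
  calc binomExp ℓ α (fun _ => c) = binomExp ℓ α (fun j => c * 1 ^ j) := by
        simp only [one_pow, mul_one]
    _ = c := by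
        rw [binomExp_const_mul, binomExp_pow, mul_one, add_sub_cancel, one_pow, mul_one]

lemma binomExp_le_one_sub_mul (hα : α ∈ Set.Icc (0 : ℝ) 1) (hℓ : 1 ≤ ℓ) (hq : q ≤ 1)
    (hf0 : f 0 ≤ 1) (hf : ∀ j ≠ 0, f j ≤ q) :
    binomExp ℓ α f ≤ 1 - α * (1 - q) := by
  have pointwise : ∀ j ≤ ℓ, f j ≤ q + (1 - q) * 0 ^ j := fun j _ => by
    rcases eq_or_ne j 0 with rfl | hj
    · simpa using hf0
    · simpa [hj] using hf j hj
  have pow_le : (1 - α) ^ ℓ ≤ 1 - α :=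
    pow_le_of_le_one (sub_nonneg.2 hα.2) (sub_le_self 1 hα.1) (Nat.one_le_iff_ne_zero.1 hℓ)
  calc binomExp ℓ α f ≤ binomExp ℓ α (fun j => q + (1 - q) * 0 ^ j) := binomExp_mono hα pointwise
    _ = q + (1 - q) * (1 - α) ^ ℓ := by
        rw [binomExp_add, binomExp_const, binomExp_const_mul, binomExp_pow, mul_zero, zero_add]
    _ ≤ q + (1 - q) * (1 - α) :=
        add_le_add_right (mul_le_mul_of_nonneg_left pow_le (sub_nonneg.2 hq)) q
    _ = 1 - α * (1 - q) := by ring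

lemma binomExp_rpow_le_exp (hα : α ∈ Set.Icc (0 : ℝ) 1) (hβ : β ∈ Set.Icc (0 : ℝ) 1)
    (hq : 0 ≤ q) (ℓ : ℕ) :
    binomExp ℓ α (fun j => q ^ (β * j)) ≤ Real.exp (-(α * (1 - q) * β * ℓ)) := by
  have hα0 : 0 ≤ α := hα.1
  have bernoulli : q ^ β ≤ 1 + β * (q - 1) := by
    simpa using rpow_one_add_le_one_add_mul_self (s := q - 1) (by linarith) hβ.1 hβ.2
  have base_nonneg : 0 ≤ α * q ^ β + (1 - α) :=
    add_nonneg (mul_nonneg hα0 (Real.rpow_nonneg hq β)) (sub_nonneg.2 hα.2)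
  have base_le_exp : α * q ^ β + (1 - α) ≤ Real.exp (-(α * (1 - q) * β)) := by
    calc α * q ^ β + (1 - α) ≤ α * (1 + β * (q - 1)) + (1 - α) := by gcongr
      _ = 1 - α * (1 - q) * β := by ring
      _ ≤ Real.exp (-(α * (1 - q) * β)) := Real.one_sub_le_exp_neg _
  calc binomExp ℓ α (fun j => q ^ (β * j)) = (α * q ^ β + (1 - α)) ^ ℓ := by
        simp only [Real.rpow_mul hq, Real.rpow_natCast, binomExp_pow]
    _ ≤ Real.exp (-(α * (1 - q) * β)) ^ ℓ := pow_le_pow_left₀ base_nonneg base_le_exp ℓ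
    _ = Real.exp (-(α * (1 - q) * β * ℓ)) := by rw [← Real.exp_nat_mul, mul_neg, mul_comm (ℓ : ℝ)]

end BinomialExpectation

section AvoidSize

/-- The number `max(K₁, X_{n,j} + 1)·1[j > 0]` of keys that have to be avoided on the event
`N = j`. -/
noncomputable def avoidSize (n P K1 : ℕ) (β γ : ℝ) (j : ℕ) : ℕ :=
  if j = 0 then 0 else max K1 (keyThr n P K1 β γ j + 1)

variable {n P a b j ℓ : ℕ} {α β γ : ℝ}

lemma avoidSize_zero (n P a : ℕ) (β γ : ℝ) : avoidSize n P a β γ 0 = 0 := if_pos rfl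

lemma le_avoidSize (n P a : ℕ) (β γ : ℝ) (hj : j ≠ 0) : a ≤ avoidSize n P a β γ j := by
  rw [avoidSize, if_neg hj]
  exact le_max_left _ _

lemma keyThr_lt_avoidSize (n P a : ℕ) (β γ : ℝ) (hj : j ≠ 0) :
    keyThr n P a β γ j < avoidSize n P a β γ j := by
  rw [avoidSize, if_neg hj]
  exact lt_max_of_lt_right (Nat.lt_add_one _)

lemma mul_le_avoidSize_of_le_cutoff (β γ : ℝ) (hj : j ≤ cutoff n P a) :
    β * j * a ≤ avoidSize n P a β γ j := by
  rcases eq_or_ne j 0 with rfl | hj0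
  · simp [avoidSize_zero]
  · have thr_lt := keyThr_lt_avoidSize n P a β γ hj0
    rw [keyThr, if_pos hj] at thr_lt
    exact (Nat.lt_of_floor_lt thr_lt).le

lemma mul_le_avoidSize_of_cutoff_lt (β γ : ℝ) (hj : cutoff n P a < j) :
    γ * P ≤ avoidSize n P a β γ j := by
  have thr_lt := keyThr_lt_avoidSize n P a β γ (Nat.ne_zero_of_lt hj)
  rw [keyThr, if_neg hj.not_ge] at thr_lt
  exact (Nat.lt_of_floor_lt thr_lt).le

lemma avoidProb_avoidSize_le_rpow (ha : 0 < a) (hb : 0 < b) (hbP : b ≤ P) (hβ : 0 ≤ β) (γ : ℝ)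
    (hj : j ≤ cutoff n P a) :
    avoidProb P (avoidSize n P a β γ j) b ≤ avoidProb P a b ^ (β * j) := by
  rcases eq_or_ne j 0 with rfl | hj0
  · simp [avoidSize_zero, avoidProb_zero_left hbP]
  · exact avoidProb_le_rpow ha hb hbP (le_avoidSize n P a β γ hj0) (by positivity)
      (mul_le_avoidSize_of_le_cutoff β γ hj)

lemma avoidProb_avoidSize_le_exp (hb : 0 < b) (hab : a ≤ b) (hbP : b ≤ P) (β : ℝ) (hγ : 0 ≤ γ)
    (hj : cutoff n P a < j) :
    avoidProb P (avoidSize n P a β γ j) b ≤ Real.exp (-(γ * a)) := by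
  have hP : (P : ℝ) ≠ 0 := Nat.cast_ne_zero.2 (hb.trans_le hbP).ne'
  have exponent_le : γ * a ≤ avoidSize n P a β γ j * (b / P) := by
    calc γ * a ≤ γ * b := by gcongr
      _ = γ * P * (b / P) := by field_simp
      _ ≤ avoidSize n P a β γ j * (b / P) :=
          mul_le_mul_of_nonneg_right (mul_le_avoidSize_of_cutoff_lt β γ hj) (by positivity)
  exact (avoidProb_le_exp hb hbP _).trans (Real.exp_le_exp.2 (neg_le_neg exponent_le))

lemma binomExp_avoidProb_le_one_sub (n P a b : ℕ) (β γ : ℝ) (hα : α ∈ Set.Icc (0 : ℝ) 1)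
    (hℓ : 1 ≤ ℓ) :
    binomExp ℓ α (fun j => avoidProb P (avoidSize n P a β γ j) b) ≤ 1 - α * pEdge P a b :=
  binomExp_le_one_sub_mul hα hℓ (avoidProb_le_one P a b) (avoidProb_le_one P _ b)
    fun _ hj => avoidProb_antitone_left P b (le_avoidSize n P a β γ hj)

lemma binomExp_avoidProb_le_exp_add (n ℓ : ℕ) (hα : α ∈ Set.Icc (0 : ℝ) 1)
    (hβ : β ∈ Set.Icc (0 : ℝ) 1) (hγ : 0 ≤ γ) (ha : 0 < a) (hab : a ≤ b) (hbP : b ≤ P) :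
    binomExp ℓ α (fun j => avoidProb P (avoidSize n P a β γ j) b) ≤
      Real.exp (-(α * pEdge P a b * β * ℓ)) +
        (if cutoff n P a < ℓ then Real.exp (-(γ * a)) else 0) := by
  have hb : 0 < b := ha.trans_le hab
  have hq : 0 ≤ avoidProb P a b := avoidProb_nonneg P a b
  set tail : ℝ := if cutoff n P a < ℓ then Real.exp (-(γ * a)) else 0 with tail_def
  have tail_nonneg : 0 ≤ tail := by
    rw [tail_def]
    positivity
  have pointwise : ∀ j ≤ ℓ, avoidProb P (avoidSize n P a β γ j) b ≤
      avoidProb P a b ^ (β * j) + tail := fun j hjℓ => by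
    rcases le_or_gt j (cutoff n P a) with hj | hj
    · exact le_add_of_le_of_nonneg (avoidProb_avoidSize_le_rpow ha hb hbP hβ.1 γ hj) tail_nonneg
    · rw [tail_def, if_pos (hj.trans_le hjℓ)]
      exact le_add_of_nonneg_of_le (Real.rpow_nonneg hq _)
        (avoidProb_avoidSize_le_exp hb hab hbP β hγ hj)
  calc binomExp ℓ α (fun j => avoidProb P (avoidSize n P a β γ j) b)
      ≤ binomExp ℓ α (fun j => avoidProb P a b ^ (β * j) + tail) := binomExp_mono hα pointwise
    _ = binomExp ℓ α (fun j => avoidProb P a b ^ (β * j)) + tail := by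
        rw [binomExp_add, binomExp_const]
    _ ≤ Real.exp (-(α * pEdge P a b * β * ℓ)) + tail :=
        add_le_add_left (binomExp_rpow_le_exp hα hβ hq ℓ) tail

end AvoidSize

section ClassAverage

variable {ι : Type*} [Fintype ι] {μ : ι → ℝ} {K : ι → ℕ} {P b : ℕ} {α β : ℝ}

lemma sum_mul_one_sub_mul_pEdge {r : ℕ} {μ : Fin (r + 1) → ℝ} (hμsum : ∑ i, μ i = 1)
    (K : Fin (r + 1) → ℕ) (P : ℕ) (α : ℝ) (k : Fin (r + 1)) :
    ∑ i, μ i * (1 - α * pEdge P (K k) (K i)) = 1 - α * lamb μ K P k := by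
  simp only [lamb, mul_sub, mul_one, Finset.sum_sub_distrib, hμsum, Finset.mul_sum, mul_left_comm]

lemma sum_mul_exp_pEdge_le_one_sub_add (hμ : ∀ i, 0 ≤ μ i) (hμsum : ∑ i, μ i = 1)
    (K : ι → ℕ) (P a ℓ : ℕ) (k : ι) (hα : 0 ≤ α) (hβ : 0 ≤ β) :
    ∑ i, μ i * Real.exp (-(α * pEdge P a (K i) * β * ℓ)) ≤
      1 - μ k + μ k * Real.exp (-(α * pEdge P a (K k) * β * ℓ)) := by
  refine sum_mul_le_one_sub_add_mul hμ hμsum (fun i => Real.exp_le_one_iff.2 ?_) k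
  have := pEdge_nonneg P a (K i)
  exact neg_nonpos.2 (by positivity)

lemma sum_mul_exp_pEdge_le_exp (hμ : ∀ i, 0 ≤ μ i) (hμsum : ∑ i, μ i = 1) (a ℓ : ℕ)
    (hα : 0 ≤ α) (hβ : 0 ≤ β) (hb : 0 < b) (hbK : ∀ i, b ≤ K i) (hKP : ∀ i, K i ≤ P) :
    ∑ i, μ i * Real.exp (-(α * pEdge P a (K i) * β * ℓ)) ≤
      Real.exp (-(α * pEdge P a b * β * ℓ)) := by
  refine sum_mul_le_of_forall_le hμ hμsum fun i => ?_
  have := pEdge_le_pEdge_right hb (hbK i) (hKP i) a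
  gcongr

end ClassAverage

theorem key_expectation_bound_general {r : ℕ} (μ : Fin (r + 1) → ℝ)
    (hμ : ∀ i, 0 ≤ μ i) (hμsum : ∑ i, μ i = 1)
    (K : Fin (r + 1) → ℕ) (P : ℕ) (α : ℝ)
    (hK1 : 1 ≤ K 0) (hK0 : ∀ i, K 0 ≤ K i) (hKP : ∀ i, K i ≤ P)
    (hα : α ∈ Set.Icc (0 : ℝ) 1)
    (β γ : ℝ) (hβ : β ∈ Set.Icc (0 : ℝ) 1) (hγ : 0 ≤ γ)
    (n ℓ : ℕ) (hℓ : 1 ≤ ℓ) :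
    (∑ j ∈ Finset.range (ℓ + 1), ∑ i : Fin (r + 1),
        (ℓ.choose j : ℝ) * α ^ j * (1 - α) ^ (ℓ - j) * μ i *
          (((P - (if j = 0 then 0 else max (K 0) (keyThr n P (K 0) β γ j + 1))).choose (K i) : ℝ) /
            (P.choose (K i) : ℝ))) ≤
      min (1 - α * lamb μ K P 0)
        (min (1 - μ (Fin.last r) +
            μ (Fin.last r) * Real.exp (-(α * pEdge P (K 0) (K (Fin.last r)) * β * ℓ)))
          (Real.exp (-(α * pEdge P (K 0) (K 0) * β * ℓ))) +
          (if cutoff n P (K 0) < ℓ then Real.exp (-(γ * (K 0 : ℝ))) else 0)) := by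
  refine (sum_range_sum_eq_sum_mul_binomExp ℓ α μ
    fun j i => avoidProb P (avoidSize n P (K 0) β γ j) (K i)).trans_le (le_min ?_ ?_)
  · rw [← sum_mul_one_sub_mul_pEdge hμsum]
    exact Finset.sum_le_sum fun i _ => mul_le_mul_of_nonneg_left
      (binomExp_avoidProb_le_one_sub n P (K 0) (K i) β γ hα hℓ) (hμ i)
  · refine (Finset.sum_le_sum fun i _ => mul_le_mul_of_nonneg_left
      (binomExp_avoidProb_le_exp_add n ℓ hα hβ hγ hK1 (hK0 i) (hKP i)) (hμ i)).trans ?_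
    rw [sum_mul_add_const hμsum]
    exact add_le_add_left (le_min
      (sum_mul_exp_pEdge_le_one_sub_add hμ hμsum K P (K 0) ℓ (Fin.last r) hα.1 hβ.1)
      (sum_mul_exp_pEdge_le_exp hμ hμsum (K 0) ℓ hα.1 hβ.1 hK1 hK0 hKP)) _

/-- key lemma: with `N ∼ Binomial(ℓ, α)` and `S` independent with
`P[S = K_j] = μ_j`, one has
`E[C(P − max(K₁, X_{n,N}+1)·1[N>0], S)/C(P,S)] ≤
  min(1 − α λ₁, min(1 − μ_r + μ_r e^{−α p_{1r} β ℓ}, e^{−α p_{11} β ℓ}) + e^{−γK₁} 1[ℓ > Lₙ])`. -/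
theorem key_expectation_bound {r : ℕ} (μ : Fin (r + 1) → ℝ)
    (hμpos : ∀ i, 0 < μ i) (hμsum : ∑ i, μ i = 1)
    (K : Fin (r + 1) → ℕ) (P : ℕ) (α : ℝ)
    (hK1 : 1 ≤ K 0) (hKmono : Monotone K) (hKP : 2 * K (Fin.last r) ≤ P)
    (hα : α ∈ Set.Ioo (0 : ℝ) 1)
    (β γ : ℝ) (hβ : β ∈ Set.Ioo (0 : ℝ) (1 / 2)) (hγ : γ ∈ Set.Ioo (0 : ℝ) (1 / 2))
    (n ℓ : ℕ) (hℓ : 1 ≤ ℓ) (hℓn : ℓ ≤ n) :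
    (∑ j ∈ Finset.range (ℓ + 1), ∑ i : Fin (r + 1),
        (ℓ.choose j : ℝ) * α ^ j * (1 - α) ^ (ℓ - j) * μ i *
          (((P - (if j = 0 then 0 else max (K 0) (keyThr n P (K 0) β γ j + 1))).choose (K i) : ℝ) /
            (P.choose (K i) : ℝ))) ≤
      min (1 - α * lamb μ K P 0)
        (min (1 - μ (Fin.last r) +
            μ (Fin.last r) * Real.exp (-(α * pEdge P (K 0) (K (Fin.last r)) * β * ℓ)))
          (Real.exp (-(α * pEdge P (K 0) (K 0) * β * ℓ))) +
          (if cutoff n P (K 0) < ℓ then Real.exp (-(γ * (K 0 : ℝ))) else 0)) := by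
  have hKP' (i : Fin (r + 1)) : K i ≤ P := by have := hKmono (Fin.le_last i); omega
  exact key_expectation_bound_general μ (fun i => (hμpos i).le) hμsum K P α hK1
    (fun i => hKmono (Fin.zero_le i)) hKP' (Set.Ioo_subset_Icc_self hα) β γ
    ⟨hβ.1.le, by linarith [hβ.2]⟩ hγ.1.le n ℓ hℓ
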